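/- (Main Result II) Let N ≥ 2 and let F : ℝᴺ × ℝ → ℝ satisfy hypotheses (H) and (H*). Then there exists D* > 0 such that for every D ∈ (0, D*] there exists 𝓇 > 0 with the following property: for every C¹, 𝟙-periodic function H : ℝᴺ → ℝᴺ with ‖H‖_B < 𝓇, there exist an initial condition X* ∈ ℝᴺ, a real number ρ > 0, and C¹ functions Ψ₁, …, Ψ_N : ℝ → ℝ, each periodic with period 1/ρ, such that the solution X = (x₁,…,x_N) of xᵢ' = F(X, xᵢ) + Hᵢ(X) with X(t₀) = X* is defined for all t ≥ t₀ and satisfies xᵢ(t) = ρ t + Ψᵢ(t) for every i = 1,…,N and all t ≥ t₀. -/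

import Mathlib

open Real Set

noncomputable section

/-- The set `B ⊂ ℝᴺ⁺¹`: points `(Y, z)` all of whose pairwise coordinate differences
are at most `1`. -/
def memB {N : ℕ} (Y : Fin N → ℝ) (z : ℝ) : Prop :=
  (∀ i j : Fin N, |Y i - Y j| ≤ 1) ∧ (∀ i : Fin N, |Y i - z| ≤ 1)

/-- The set `B ⊂ ℝᴺ`: points all of whose pairwise coordinate differences are at
most `1`. -/
def memB' {N : ℕ} (Y : Fin N → ℝ) : Prop :=
  ∀ i j : Fin N, |Y i - Y j| ≤ 1

/-- Partial derivative of `F : ℝᴺ × ℝ → ℝ` in the `j`-th of the first `N` variables. -/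
def pder {N : ℕ} (F : (Fin N → ℝ) → ℝ → ℝ) (j : Fin N) (Y : Fin N → ℝ) (z : ℝ) : ℝ :=
  deriv (fun u => F (Function.update Y j u) z) (Y j)

/-- Partial derivative of `F : ℝᴺ × ℝ → ℝ` in the last variable. -/
def pderZ {N : ℕ} (F : (Fin N → ℝ) → ℝ → ℝ) (Y : Fin N → ℝ) (z : ℝ) : ℝ :=
  deriv (fun u => F Y u) z

/-- Values `|F(Y,z)|`, `(Y,z) ∈ B`. -/
def valsB {N : ℕ} (F : (Fin N → ℝ) → ℝ → ℝ) : Set ℝ :=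
  {x | ∃ Y z, memB Y z ∧ x = |F Y z|}

/-- Values of the absolute first partial derivatives of `F` on `B`. -/
def valsB_d {N : ℕ} (F : (Fin N → ℝ) → ℝ → ℝ) : Set ℝ :=
  {x | ∃ Y z, memB Y z ∧ (x = |pderZ F Y z| ∨ ∃ j, x = |pder F j Y z|)}

/-- Values of the absolute second partial derivatives of `F` on `B`. -/
def valsB_d2 {N : ℕ} (F : (Fin N → ℝ) → ℝ → ℝ) : Set ℝ :=
  {x | ∃ Y z, memB Y z ∧
    (x = |pderZ (fun Y' z' => pderZ F Y' z') Y z| ∨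
     (∃ j, x = |pder (fun Y' z' => pderZ F Y' z') j Y z|) ∨
     (∃ j, x = |pderZ (fun Y' z' => pder F j Y' z') Y z|) ∨
     (∃ j k, x = |pder (fun Y' z' => pder F j Y' z') k Y z|))}

/-- `‖F‖_B`. -/
def normB {N : ℕ} (F : (Fin N → ℝ) → ℝ → ℝ) : ℝ := sSup (valsB F)

/-- `‖dF‖_B`. -/
def normB_d {N : ℕ} (F : (Fin N → ℝ) → ℝ → ℝ) : ℝ := sSup (valsB_d F)

/-- `‖d²F‖_B`. -/
def normB_d2 {N : ℕ} (F : (Fin N → ℝ) → ℝ → ℝ) : ℝ := sSup (valsB_d2 F)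

/-- `‖H‖_B` for a map `H : ℝᴺ → ℝᴺ`. -/
def normB_vec {N : ℕ} (H : (Fin N → ℝ) → Fin N → ℝ) : ℝ :=
  sSup {x | ∃ Y, memB' Y ∧ ∃ i, x = |H Y i|}

/-- `L = ‖F‖_B + ‖dF‖_B + ‖d²F‖_B`. -/
def Lconst {N : ℕ} (F : (Fin N → ℝ) → ℝ → ℝ) : ℝ :=
  normB F + normB_d F + normB_d2 F

/-- `α = min_{s ∈ [0,1]} F(s𝟙, s)`. -/
def alphaConst {N : ℕ} (F : (Fin N → ℝ) → ℝ → ℝ) : ℝ :=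
  sInf ((fun s => F (fun _ => s) s) '' Set.Icc (0:ℝ) 1)

/-- `M = max_{s ∈ [0,1]} F(s𝟙, s)`. -/
def Mconst {N : ℕ} (F : (Fin N → ℝ) → ℝ → ℝ) : ℝ :=
  sSup ((fun s => F (fun _ => s) s) '' Set.Icc (0:ℝ) 1)

/-- Hypothesis `(H)`: `F` is `C²`, its `B`-norms `‖F‖_B, ‖dF‖_B, ‖d²F‖_B` are finite,
`F` is `𝟙`-periodic, and `min_{s∈[0,1]} F(s𝟙,s) > 0`. -/
def HypH {N : ℕ} (F : (Fin N → ℝ) → ℝ → ℝ) : Prop :=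
  ContDiff ℝ 2 (fun p : (Fin N → ℝ) × ℝ => F p.1 p.2) ∧
  BddAbove (valsB F) ∧ BddAbove (valsB_d F) ∧ BddAbove (valsB_d2 F) ∧
  (∀ (Y : Fin N → ℝ) (z : ℝ), F (fun i => Y i + 1) (z + 1) = F Y z) ∧
  0 < alphaConst F

/-- Hypothesis `(H*)`: `∫₀¹ ∂_z F(s𝟙, s)/F(s𝟙, s) ds < 0`. -/
def HypHstar {N : ℕ} (F : (Fin N → ℝ) → ℝ → ℝ) : Prop :=
  (∫ s in (0:ℝ)..(1:ℝ), pderZ F (fun _ => s) s / F (fun _ => s) s) < 0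

end

open Metric MeasureTheory Topology NNReal Filter Polynomial Function

/-!
Write a state as `X = θ𝟙 + Y` and let the phase `θ` move by `θ' = F(X, θ)`. With `θ` as time the
system becomes the `1`-periodic equation `Yᵢ' = (F(X, θ + Yᵢ) + Hᵢ(X)) / F(X, θ) - 1`, whose
linearisation at `Y = 0`, `H = 0` is the scalar equation `y' = β y` with `β = ∂_z F / F` along the
diagonal. By `(H*)` its Floquet multiplier `exp ∫ β` is less than `1`. Since `H` is small only in
the sup norm, the Poincaré map need not be a contraction, but it maps a small ball into itself, so
Brouwer's theorem yields a `1`-periodic `Y`; the time `θ` takes to increase by `1` along it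
is `1 / ρ`.

Brouwer's theorem is proved following Milnor and Rogers: if `r` were a `C¹` retraction of the unit
ball onto the sphere, then `∫ det (id + t (Dr - id))` would be a polynomial in `t`, equal to the
volume of the ball for small `t` because `id + t (r - id)` is then a bijection of the ball, hence
also at `t = 1`, where `det Dr = 0` because `‖r‖` is constant.
-/

section Brouwer

theorem inter_frontier_nonempty_of_isPreconnected {X : Type*} [TopologicalSpace X] {c s : Set X}
    (hc : IsPreconnected c) (hs : (c ∩ s).Nonempty) (hs' : ¬ c ⊆ s) :
    (c ∩ frontier s).Nonempty := by
  by_contra! h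
  obtain ⟨x, hxc, hxs⟩ := hs
  have hcover : c ⊆ interior s ∪ (closure s)ᶜ := fun y hy => by
    by_contra! hy'
    simp only [mem_union, mem_compl_iff, not_or, not_not] at hy'
    exact (h.subset ⟨hy, hy'.2, hy'.1⟩ :)
  have hx : x ∈ interior s :=
    (hcover hxc).resolve_right fun hx => hx (subset_closure hxs)
  refine hs' ((hc.subset_left_of_subset_union isOpen_interior isClosed_closure.isOpen_compl ?_
    hcover ⟨x, hxc, hx⟩).trans interior_subset)
  exact disjoint_compl_right.mono_left interior_subset_closure

theorem lipschitzWith_indicator {E F : Type*} [NormedAddCommGroup E] [NormedSpace ℝ E]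
    [PseudoMetricSpace F] [Zero F] {s : Set E} {f : E → F} {K : ℝ≥0} (hs : IsClosed s)
    (hf : LipschitzOnWith K f s) (hf₀ : EqOn f 0 (frontier s)) :
    LipschitzWith K (s.indicator f) := by
  have dist_le : ∀ x ∈ s, ∀ y ∉ s, dist (f x) 0 ≤ K * dist x y := by
    intro x hx y hy
    obtain ⟨z, hz, hzs⟩ := inter_frontier_nonempty_of_isPreconnected
      (convex_segment (𝕜 := ℝ) x y).isPreconnected ⟨x, left_mem_segment ℝ x y, hx⟩
      fun h => hy (h (right_mem_segment ℝ x y))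
    calc dist (f x) 0 = dist (f x) (f z) := by rw [hf₀ hzs, Pi.zero_apply]
      _ ≤ K * dist x z := hf.dist_le_mul x hx z (hs.frontier_subset hzs)
      _ ≤ K * dist x y := by
        gcongr
        linarith [dist_add_dist_of_mem_segment hz, dist_nonneg (x := z) (y := y)]
  refine LipschitzWith.of_dist_le_mul fun x y => ?_
  by_cases hx : x ∈ s <;> by_cases hy : y ∈ s <;> simp only [hx, hy, indicator_of_mem,
    indicator_of_notMem, not_false_eq_true, dist_self]
  · exact hf.dist_le_mul x hx y hy
  · exact dist_le x hx y hy
  · rw [dist_comm, dist_comm x]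
    exact dist_le y hy x hx
  · positivity

theorem bijective_id_add_of_lipschitzWith {E : Type*} [NormedAddCommGroup E] [CompleteSpace E]
    {g : E → E} {K : ℝ≥0} (hK : K < 1) (hg : LipschitzWith K g) :
    Bijective fun x => x + g x := by
  refine (bijective_iff_existsUnique _).2 fun y => ?_
  have hcontr : ContractingWith K fun x => y - g x :=
    ⟨hK, LipschitzWith.of_dist_le_mul fun x x' => by
      rw [dist_sub_left]; exact hg.dist_le_mul x x'⟩
  have fixed_iff : ∀ x, x + g x = y ↔ IsFixedPt (fun x => y - g x) x := fun x =>
    eq_sub_iff_add_eq.symm.trans eq_comm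
  simp only [fixed_iff]
  exact ⟨hcontr.fixedPoint, hcontr.fixedPoint_isFixedPt, fun x => hcontr.fixedPoint_unique⟩

theorem image_eq_of_bijective_of_eqOn_id {X : Type*} {h : X → X} {s : Set X} (hh : Bijective h)
    (hs : EqOn h id sᶜ) : h '' s = s := by
  rw [← compl_inj_iff, ← image_compl_eq hh, hs.image_eq, image_id]

theorem exists_polynomial_eval_eq_det_id_add_smul {E : Type*} [NormedAddCommGroup E]
    [NormedSpace ℝ E] [FiniteDimensional ℝ E] (A : E →L[ℝ] E) :
    ∃ p : ℝ[X], p.natDegree ≤ Module.finrank ℝ E ∧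
      ∀ t : ℝ, p.eval t = (ContinuousLinearMap.id ℝ E + t • A).det := by
  classical
  let b := Module.finBasis ℝ E
  let M := LinearMap.toMatrix b b (A : E →ₗ[ℝ] E)
  refine ⟨((X : ℝ[X]) • M.map C + (1 : Matrix _ _ ℝ).map C).det,
    by simpa using natDegree_det_X_add_C_le M 1, fun t => ?_⟩
  have hdet : (ContinuousLinearMap.id ℝ E + t • A).det = (t • M + 1).det := by
    rw [ContinuousLinearMap.det, ← LinearMap.det_toMatrix b, ContinuousLinearMap.toLinearMap_add,
      ContinuousLinearMap.toLinearMap_smul, ContinuousLinearMap.coe_id, map_add, map_smul,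
      LinearMap.toMatrix_id, add_comm]
  rw [hdet, ← coe_evalRingHom, RingHom.map_det]
  congr 1
  ext i j
  rcases eq_or_ne i j with rfl | hij
  · simpa using mul_comm _ _
  · simpa [hij] using mul_comm _ _

theorem exists_polynomial_eval_eq_integral {X : Type*} [MeasurableSpace X] {μ : Measure X} {n : ℕ}
    {f : X → ℝ[X]} (hf : ∀ x, (f x).natDegree ≤ n)
    (hint : ∀ t, Integrable (fun x => (f x).eval t) μ) :
    ∃ p : ℝ[X], ∀ t, p.eval t = ∫ x, (f x).eval t ∂μ := by
  classical
  let nodes := Finset.range (n + 1)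
  let node : ℕ → ℝ := (↑)
  have hdeg : ∀ x, (f x).degree < nodes.card := fun x => by
    rw [Finset.card_range]
    exact degree_le_natDegree.trans_lt (by exact_mod_cast Nat.lt_succ_of_le (hf x))
  have eval_eq : ∀ (r : ℕ → ℝ) t, (Lagrange.interpolate nodes node r).eval t =
      ∑ i ∈ nodes, r i * (Lagrange.basis nodes node i).eval t := fun r t => by
    simp only [Lagrange.interpolate_apply, eval_finsetSum, eval_mul, eval_C]
  refine ⟨Lagrange.interpolate nodes node fun i => ∫ x, (f x).eval (node i) ∂μ, fun t => ?_⟩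
  calc (Lagrange.interpolate nodes node fun i => ∫ x, (f x).eval (node i) ∂μ).eval t
      = ∫ x, ∑ i ∈ nodes, (f x).eval (node i) * (Lagrange.basis nodes node i).eval t ∂μ := by
        rw [eval_eq, integral_finsetSum _ fun i _ => (hint (node i)).mul_const _]
        simp only [integral_mul_const]
    _ = ∫ x, (f x).eval t ∂μ := integral_congr_ae <| ae_of_all _ fun x => by
        beta_reduce
        rw [← eval_eq, ← Lagrange.eq_interpolate Nat.cast_injective.injOn (hdeg x)]

section AddHaar

variable {E : Type*} [NormedAddCommGroup E] [NormedSpace ℝ E] [FiniteDimensional ℝ E]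
  [MeasurableSpace E] [BorelSpace E] (μ : Measure E) [μ.IsAddHaarMeasure]

theorem eventually_setIntegral_det_eq
    {s : Set E} (hs : IsOpen s) {g : E → E} {A : E → E →L[ℝ] E} {K : ℝ≥0} (hg : LipschitzWith K g)
    (hg₀ : EqOn g 0 sᶜ) (hA : ∀ x ∈ s, HasFDerivAt g (A x) x) :
    ∀ᶠ t in 𝓝 (0 : ℝ), ∫ x in s, (ContinuousLinearMap.id ℝ E + t • A x).det ∂μ = μ.real s := by
  have det_pos : ∀ᶠ L : E →L[ℝ] E in 𝓝 0, 0 < (ContinuousLinearMap.id ℝ E + L).det := by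
    have hcont : Continuous fun L : E →L[ℝ] E => (ContinuousLinearMap.id ℝ E + L).det :=
      ContinuousLinearMap.continuous_det.comp (continuous_const.add continuous_id)
    exact hcont.continuousAt.eventually (lt_mem_nhds (by simp [ContinuousLinearMap.det]))
  obtain ⟨ε, hε, hball⟩ := Metric.eventually_nhds_iff.1 det_pos
  have tendsto_mul : Tendsto (fun t : ℝ => ‖t‖ * K) (𝓝 0) (𝓝 0) := by
    have : Continuous fun t : ℝ => ‖t‖ * K := by fun_prop
    simpa using this.tendsto 0
  filter_upwards [tendsto_mul.eventually (gt_mem_nhds one_pos),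
    tendsto_mul.eventually (gt_mem_nhds hε)] with t ht₁ htε
  have hbij : Bijective fun x => x + t • g x :=
    bijective_id_add_of_lipschitzWith (K := ‖t‖₊ * K) (by exact_mod_cast ht₁) <|
      (lipschitzWith_smul t).comp hg
  have himage : (fun x => x + t • g x) '' s = s :=
    image_eq_of_bijective_of_eqOn_id hbij fun x hx => by simp [hg₀ hx]
  have hderiv : ∀ x ∈ s, HasFDerivWithinAt (fun x => x + t • g x)
      (ContinuousLinearMap.id ℝ E + t • A x) s x := fun x hx =>
    ((hasFDerivAt_id x).add ((hA x hx).const_smul t)).hasFDerivWithinAt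
  have det_pos_of_mem : ∀ x ∈ s, 0 < (ContinuousLinearMap.id ℝ E + t • A x).det := fun x hx =>
    hball <| by
      rw [dist_zero_right, norm_smul]
      exact (mul_le_mul_of_nonneg_left ((hA x hx).le_of_lipschitz hg) (norm_nonneg t)).trans_lt htε
  calc ∫ x in s, (ContinuousLinearMap.id ℝ E + t • A x).det ∂μ
      = ∫ x in s, |(ContinuousLinearMap.id ℝ E + t • A x).det| • (1 : ℝ) ∂μ :=
        setIntegral_congr_fun hs.measurableSet fun x hx => by
          simp only [abs_of_pos (det_pos_of_mem x hx), smul_eq_mul, mul_one]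
    _ = ∫ _ in (fun x => x + t • g x) '' s, (1 : ℝ) ∂μ :=
        (integral_image_eq_integral_abs_det_fderiv_smul μ hs.measurableSet hderiv
          hbij.injective.injOn fun _ => 1).symm
    _ = μ.real s := by rw [himage, setIntegral_const, smul_eq_mul, mul_one]

theorem setIntegral_det_eq
    {s : Set E} (hs : IsOpen s) {g : E → E} {A : E → E →L[ℝ] E} {K : ℝ≥0} (hg : LipschitzWith K g)
    (hg₀ : EqOn g 0 sᶜ) (hA : ∀ x ∈ s, HasFDerivAt g (A x) x)
    (hint : ∀ t : ℝ, IntegrableOn (fun x => (ContinuousLinearMap.id ℝ E + t • A x).det) s μ)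
    (t : ℝ) : ∫ x in s, (ContinuousLinearMap.id ℝ E + t • A x).det ∂μ = μ.real s := by
  choose f hdeg heval using fun x => exists_polynomial_eval_eq_det_id_add_smul (A x)
  obtain ⟨p, hp⟩ := exists_polynomial_eval_eq_integral (μ := μ.restrict s) hdeg
    (by simpa only [heval, IntegrableOn] using hint)
  simp only [heval] at hp
  have hconst : p = C (μ.real s) := eq_of_infinite_eval_eq _ _ <| infinite_of_mem_nhds 0 <| by
    filter_upwards [eventually_setIntegral_det_eq μ hs hg hg₀ hA] with t ht
    exact (hp t).trans (ht.trans eval_C.symm)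
  rw [← hp, hconst, eval_C]

theorem setIntegral_ball_det_eq
    {g : E → E} {c : E} {R : ℝ} (hg : ContDiff ℝ 1 g) (hg₀ : EqOn g 0 (sphere c R)) (t : ℝ) :
    ∫ x in ball c R, (ContinuousLinearMap.id ℝ E + t • fderiv ℝ g x).det ∂μ =
      μ.real (ball c R) := by
  obtain ⟨K, hK⟩ := hg.contDiffOn.exists_lipschitzOnWith one_ne_zero
    (convex_closedBall c R) (isCompact_closedBall c R)
  have hindicator : LipschitzWith K ((closedBall c R).indicator g) :=
    lipschitzWith_indicator isClosed_closedBall hK (hg₀.mono frontier_closedBall_subset_sphere)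
  refine setIntegral_det_eq μ isOpen_ball hindicator (fun x hx => ?_) (fun x hx => ?_)
    (fun t => ?_) t
  · by_cases hx' : x ∈ closedBall c R
    · rw [indicator_of_mem hx', hg₀ ((mem_closedBall.1 hx').antisymm (not_lt.1 hx))]
    · exact indicator_of_notMem hx' _
  · refine (hg.differentiable one_ne_zero x).hasFDerivAt.congr_of_eventuallyEq ?_
    filter_upwards [isOpen_ball.mem_nhds hx] with y hy
    exact indicator_of_mem (ball_subset_closedBall hy) _
  · have hcont : Continuous fun x => (ContinuousLinearMap.id ℝ E + t • fderiv ℝ g x).det :=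
      ContinuousLinearMap.continuous_det.comp
        (continuous_const.add ((hg.continuous_fderiv one_ne_zero).const_smul t))
    exact (hcont.continuousOn.integrableOn_compact (isCompact_closedBall c R)).mono_set
      ball_subset_closedBall

end AddHaar

section InnerProductSpace

variable {E : Type*} [NormedAddCommGroup E] [InnerProductSpace ℝ E] [FiniteDimensional ℝ E]

theorem det_eq_zero_of_eventually_norm_eq {r : E → E} {r' : E →L[ℝ] E} {x : E} {c : ℝ} (hc : c ≠ 0)
    (hr : HasFDerivAt r r' x) (hnorm : ∀ᶠ y in 𝓝 x, ‖r y‖ = c) : r'.det = 0 := by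
  have inner_eq_zero : ∀ v, inner ℝ (r x) (r' v) = 0 := fun v => by
    have hconst : HasFDerivAt (fun y => ‖r y‖ ^ 2) (0 : E →L[ℝ] ℝ) x :=
      (hasFDerivAt_const (c ^ 2) x).congr_of_eventuallyEq <|
        hnorm.mono fun y hy => congrArg (· ^ 2) hy
    simpa using DFunLike.congr_fun (hr.norm_sq.unique hconst) v
  by_contra hdet
  obtain ⟨v, hv⟩ : ∃ v, r' v = r x :=
    ((Module.End.isUnit_iff _).1
      ((LinearMap.isUnit_iff_isUnit_det _).2 (isUnit_iff_ne_zero.2 hdet))).surjective (r x)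
  have hrx : r x = 0 := inner_self_eq_zero.1 (hv ▸ inner_eq_zero v)
  exact hc (hnorm.self_of_nhds ▸ norm_eq_zero.2 hrx)

theorem not_eqOn_id_sphere_of_norm_eq_one {r : E → E} (hr : ContDiff ℝ 1 r)
    (hnorm : ∀ x ∈ closedBall (0 : E) 1, ‖r x‖ = 1) : ¬ EqOn r id (sphere 0 1) := by
  intro hsphere
  borelize E
  let μ : Measure E := Measure.addHaar
  have hdet : ∀ x ∈ ball (0 : E) 1,
      (ContinuousLinearMap.id ℝ E + (1 : ℝ) • fderiv ℝ (r - id) x).det = 0 := fun x hx => by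
    have hrx := (hr.differentiable one_ne_zero x).hasFDerivAt
    rw [one_smul, (hrx.sub (hasFDerivAt_id x)).fderiv, add_sub_cancel]
    refine det_eq_zero_of_eventually_norm_eq one_ne_zero hrx ?_
    filter_upwards [isOpen_ball.mem_nhds hx] with y hy using hnorm y (ball_subset_closedBall hy)
  have hvol : μ.real (ball (0 : E) 1) = 0 := by
    rw [← setIntegral_ball_det_eq μ (hr.sub contDiff_id) fun x hx => sub_eq_zero.2 (hsphere hx)]
    exact setIntegral_eq_zero_of_forall_eq_zero hdet
  exact (measure_ball_pos μ 0 one_pos).ne' <|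
    (measureReal_eq_zero_iff measure_ball_lt_top.ne).1 hvol

theorem exists_isFixedPt_of_contDiff_of_norm_le {f : E → E} (hf : ContDiff ℝ 1 f) {C : ℝ}
    (hC : ∀ x, ‖f x‖ ≤ C) : ∃ x, IsFixedPt f x := by
  by_contra! hne
  have hC₀ : 0 ≤ C := (norm_nonneg _).trans (hC 0)
  let χ : ContDiffBump (0 : E) := ⟨C + 1, C + 2, by linarith, by linarith⟩
  -- `φ` has no zero and is the identity where `χ` vanishes, so normalising it gives a retraction.
  let φ : E → E := fun x => x - χ x • f x
  have hφ : ∀ x, φ x ≠ 0 := fun x hx => by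
    have hx' : x = χ x • f x := sub_eq_zero.1 hx
    have hxC : ‖x‖ ≤ C := by
      rw [hx', norm_smul, norm_of_nonneg χ.nonneg]
      exact (mul_le_of_le_one_left (norm_nonneg _) χ.le_one).trans (hC x)
    have hχ : χ x = 1 := χ.one_of_mem_closedBall <| mem_closedBall_zero_iff.2 <|
      hxC.trans (le_add_of_nonneg_right zero_le_one)
    rw [hχ, one_smul] at hx'
    exact hne x hx'.symm
  have hφ_smooth : ContDiff ℝ 1 fun x => φ (χ.rOut • x) :=
    (contDiff_id.sub (χ.contDiff.smul hf)).comp (contDiff_const_smul χ.rOut)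
  refine not_eqOn_id_sphere_of_norm_eq_one (r := fun x => ‖φ (χ.rOut • x)‖⁻¹ • φ (χ.rOut • x))
    (((hφ_smooth.norm ℝ fun x => hφ _).inv fun x => norm_ne_zero_iff.2 (hφ _)).smul hφ_smooth)
    (fun x _ => norm_smul_inv_norm (𝕜 := ℝ) (hφ _)) fun x hx => ?_
  have hnorm : ‖χ.rOut • x‖ = χ.rOut := by
    rw [norm_smul, norm_of_nonneg χ.rOut_pos.le, mem_sphere_zero_iff_norm.1 hx, mul_one]
  have hφx : φ (χ.rOut • x) = χ.rOut • x := by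
    simp only [φ, χ.zero_of_le_dist (dist_zero_right (χ.rOut • x) ▸ hnorm.ge), zero_smul, sub_zero]
  simp only [hφx, hnorm, id, inv_smul_smul₀ χ.rOut_pos.ne']

end InnerProductSpace

section NormedSpace

variable {E : Type*} [NormedAddCommGroup E] [NormedSpace ℝ E] [FiniteDimensional ℝ E]

theorem exists_isFixedPt_of_continuous_of_norm_le {f : E → E} (hf : Continuous f) {C : ℝ}
    (hC : ∀ x, ‖f x‖ ≤ C) : ∃ x, IsFixedPt f x := by
  by_contra! hne
  obtain ⟨g, hg, hgf, -⟩ := hf.exists_contDiff_approx 1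
    (ε := fun x => min 1 (dist x (f x))) (by fun_prop)
    fun x => lt_min one_pos (dist_pos.2 (Ne.symm (hne x)))
  have hgC : ∀ x, ‖g x‖ ≤ C + 1 := fun x =>
    (norm_le_norm_add_const_of_dist_le ((hgf x).le.trans (min_le_left _ _))).trans
      (add_le_add_left (hC x) 1)
  let e := toEuclidean (E := E)
  obtain ⟨y, hy⟩ := exists_isFixedPt_of_contDiff_of_norm_le (f := fun y => e (g (e.symm y)))
    (e.contDiff.comp (hg.comp e.symm.contDiff)) fun y =>
      e.toContinuousLinearMap.le_opNorm_of_le (hgC (e.symm y))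
  have hx : g (e.symm y) = e.symm y := e.eq_symm_apply.2 hy
  exact (hgf (e.symm y)).not_ge (hx.symm ▸ min_le_right _ _)

theorem exists_mem_closedBall_isFixedPt {f : E → E} {c : E} {R : ℝ} (hR : 0 < R)
    (hf : ContinuousOn f (closedBall c R)) (hmaps : MapsTo f (closedBall c R) (closedBall c R)) :
    ∃ x ∈ closedBall c R, IsFixedPt f x := by
  have : TietzeExtension (closedBall c R) := Metric.instTietzeExtensionClosedBall ℝ c hR
  obtain ⟨g, hg, hgf⟩ := ContinuousMap.exists_forall_mem_restrict_eq isClosed_closedBall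
    ⟨(closedBall c R).domRestrict f, hf.domRestrict⟩ (t := closedBall c R) fun x => hmaps x.2
  obtain ⟨x, hx⟩ := exists_isFixedPt_of_continuous_of_norm_le g.continuous
    fun y => norm_le_norm_add_const_of_dist_le (hg y)
  have hxmem : x ∈ closedBall c R := hx ▸ hg x
  have hgx : g x = f x := DFunLike.congr_fun hgf ⟨x, hxmem⟩
  exact ⟨x, hxmem, hgx.symm.trans hx⟩

end NormedSpace

end Brouwer

section PeriodicODE

variable {E : Type*} [NormedAddCommGroup E] [NormedSpace ℝ E]

theorem exists_flow_mem_closedBall [CompleteSpace E] {W : ℝ → E → E} {a b : ℝ} (hab : a ≤ b)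
    {K L r R : ℝ≥0} (hLR : L * (b - a) ≤ R - r)
    (hlip : ∀ s ∈ Icc a b, LipschitzOnWith K (W s) (closedBall 0 R))
    (hcont : ∀ y ∈ closedBall 0 (R : ℝ), ContinuousOn (W · y) (Icc a b))
    (hbound : ∀ s ∈ Icc a b, ∀ y ∈ closedBall 0 (R : ℝ), ‖W s y‖ < L) :
    ∃ φ : E → ℝ → E, (∀ t ∈ Icc a b, ContinuousOn (φ · t) (closedBall 0 r)) ∧
      ∀ x ∈ closedBall (0 : E) r, φ x a = x ∧ ∀ t ∈ Icc a b,
        HasDerivWithinAt (φ x) (W t (φ x t)) (Icc a b) t ∧ ‖φ x t‖ ≤ r + L * (t - a) := by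
  have hpl : IsPicardLindelof W (⟨a, left_mem_Icc.2 hab⟩ : Icc a b) 0 R r L K :=
    ⟨hlip, hcont, fun s hs y hy => (hbound s hs y hy).le, by
      simpa only [sub_self, max_eq_left (sub_nonneg.2 hab)] using hLR⟩
  obtain ⟨φ, hφ, K', hK'⟩ :=
    hpl.exists_forall_mem_closedBall_eq_hasDerivWithinAt_lipschitzOnWith
  refine ⟨φ, fun t ht => (hK' t ht).continuousOn, fun x hx => ⟨(hφ x hx).1, fun t ht =>
    ⟨(hφ x hx).2 t ht, ?_⟩⟩⟩
  have hderiv : ∀ s : ℝ, HasDerivAt (fun s => (r : ℝ) + L * (s - a)) L s := fun s => by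
    simpa using (((hasDerivAt_id s).sub_const a).const_mul (L : ℝ)).const_add (r : ℝ)
  refine image_norm_le_of_norm_deriv_right_lt_deriv_boundary
    (fun s hs => ((hφ x hx).2 s hs).continuousWithinAt)
    (fun s hs => ((hφ x hx).2 s (Ico_subset_Icc_self hs)).mono_of_mem_nhdsWithin
      (Icc_mem_nhdsGE_of_mem hs)) ?_ hderiv (fun s hs hnorm => ?_) ht
  · simpa [(hφ x hx).1] using hx
  · refine hbound s (Ico_subset_Icc_self hs) _ (mem_closedBall_zero_iff.2 ?_)
    have : L * (s - a) ≤ L * (b - a) := by gcongr; exact hs.2.le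
    linarith

theorem exists_hasDerivWithinAt_apply_zero_eq_smul [FiniteDimensional ℝ E] {W : ℝ → E → E} {K : ℝ≥0}
    {R l : ℝ} (hR : 0 < R) (hl₀ : 0 < l) (hl₁ : l ≤ 1)
    (hlip : ∀ s ∈ Icc (0 : ℝ) 1, LipschitzOnWith K (W s) (closedBall 0 R))
    (hcont : ∀ y ∈ closedBall 0 R, ContinuousOn (W · y) (Icc 0 1))
    (hbound : ∀ s ∈ Icc (0 : ℝ) 1, ∀ y ∈ closedBall 0 R, ‖W s y‖ < (1 - l) * R) :
    ∃ v : ℝ → E, v 0 = l • v 1 ∧ ∀ s ∈ Icc (0 : ℝ) 1,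
      HasDerivWithinAt v (W s (v s)) (Icc 0 1) s ∧ v s ∈ closedBall 0 R := by
  have hL : 0 ≤ (1 - l) * R := mul_nonneg (sub_nonneg.2 hl₁) hR.le
  have hr : 0 < l * R := mul_pos hl₀ hR
  obtain ⟨φ, hφcont, hφ⟩ := exists_flow_mem_closedBall zero_le_one
    (L := .mk _ hL) (r := .mk _ hr.le) (R := .mk _ hR.le)
    (by simp only [NNReal.coe_mk]; linarith) hlip hcont hbound
  have hφR : ∀ x ∈ closedBall (0 : E) (l * R), ∀ s ∈ Icc (0 : ℝ) 1, φ x s ∈ closedBall 0 R :=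
    fun x hx s hs => mem_closedBall_zero_iff.2 <| ((hφ x hx).2 s hs).2.trans <| by
      simp only [NNReal.coe_mk]
      nlinarith [hs.2]
  have hone : (1 : ℝ) ∈ Icc (0 : ℝ) 1 := right_mem_Icc.2 zero_le_one
  obtain ⟨x, hx, hfix⟩ := exists_mem_closedBall_isFixedPt (f := fun x => l • φ x 1) hr
    ((hφcont 1 hone).const_smul l) fun x hx => by
      rw [mem_closedBall_zero_iff, norm_smul, norm_of_nonneg hl₀.le]
      exact mul_le_mul_of_nonneg_left (mem_closedBall_zero_iff.1 (hφR x hx 1 hone)) hl₀.le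
  exact ⟨φ x, (hφ x hx).1.trans hfix.symm, fun s hs => ⟨((hφ x hx).2 s hs).1, hφR x hx s hs⟩⟩

theorem fract_mem_Icc (s : ℝ) : Int.fract s ∈ Icc (0 : ℝ) 1 :=
  ⟨Int.fract_nonneg s, (Int.fract_lt_one s).le⟩

theorem periodic_apply_fract {α : Type*} {f : ℝ → α} (hf : Periodic f 1) (s : ℝ) :
    f (Int.fract s) = f s := by
  simpa only [Int.fract, mul_one] using hf.sub_int_mul_eq (x := s) ⌊s⌋

theorem hasDerivAt_comp_fract [CompleteSpace E] {y G : ℝ → E} (hG : Continuous G)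
    (hG' : Periodic G 1) (hy : ∀ s ∈ Icc (0 : ℝ) 1, HasDerivWithinAt y (G s) (Icc 0 1) s)
    (hy₀₁ : y 0 = y 1) (s : ℝ) : HasDerivAt (fun s => y (Int.fract s)) (G s) s := by
  let Z : ℝ → E := fun s => y 0 + ∫ u in 0..s, G u
  have hZ : ∀ s ∈ Icc (0 : ℝ) 1, Z s = y s := fun s hs => by
    have hint : ∫ u in 0..s, G u = y s - y 0 :=
      intervalIntegral.integral_eq_sub_of_hasDerivAt_of_le hs.1
        (fun u hu => (hy u ⟨hu.1, hu.2.trans hs.2⟩).continuousWithinAt.mono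
          (Icc_subset_Icc_right hs.2))
        (fun u hu => (hy u ⟨hu.1.le, hu.2.le.trans hs.2⟩).hasDerivAt
          (Icc_mem_nhds hu.1 (hu.2.trans_le hs.2)))
        (hG.intervalIntegrable _ _)
    simp only [Z, hint, add_sub_cancel]
  have hZ' : Periodic Z 1 := fun s => by
    have hperiod : y 0 + ∫ u in 0..1, G u = y 0 :=
      (hZ 1 (right_mem_Icc.2 zero_le_one)).trans hy₀₁.symm
    simp only [Z, hG'.intervalIntegral_add_eq_add 0 s (hG.intervalIntegrable · ·), zero_add,
      add_eq_left.1 hperiod, add_zero]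
  have hyZ : (fun s => y (Int.fract s)) = Z := funext fun s =>
    (hZ _ (fract_mem_Icc s)).symm.trans (periodic_apply_fract hZ' s)
  exact hyZ ▸ (hG.integral_hasStrictDerivAt 0 s).hasDerivAt.const_add (y 0)

theorem exists_integrating_factor {β : ℝ → ℝ} (hβ : Continuous β) :
    ∃ (q : ℝ → ℝ) (M : ℝ), (∀ s, HasDerivAt q (q s * β s) s) ∧ (∀ s, 0 < q s) ∧ q 0 = 1 ∧
      q 1 = exp (∫ s in 0..1, β s) ∧ 0 < M ∧ ∀ s ∈ Icc (0 : ℝ) 1, q s ≤ M ∧ (q s)⁻¹ ≤ M := by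
  let q : ℝ → ℝ := fun s => exp (∫ u in 0..s, β u)
  have hq : ∀ s, HasDerivAt q (q s * β s) s := fun s =>
    (hβ.integral_hasStrictDerivAt 0 s).hasDerivAt.exp
  have hq_cont : Continuous q := continuous_iff_continuousAt.2 fun s => (hq s).continuousAt
  have hq_pos : ∀ s, 0 < q s := fun s => exp_pos _
  obtain ⟨M, hM⟩ := (isCompact_Icc (a := (0 : ℝ)) (b := 1)).bddAbove_image
    (hq_cont.add (hq_cont.inv₀ fun s => (hq_pos s).ne')).continuousOn
  have hqM : ∀ s ∈ Icc (0 : ℝ) 1, q s ≤ M ∧ (q s)⁻¹ ≤ M := fun s hs => by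
    have hsum : q s + (q s)⁻¹ ≤ M := hM (mem_image_of_mem _ hs)
    have hinv_pos := inv_pos.2 (hq_pos s)
    constructor <;> linarith [hq_pos s]
  exact ⟨q, M, hq, hq_pos, by simp [q], rfl,
    (hq_pos 0).trans_le (hqM 0 (left_mem_Icc.2 zero_le_one)).1, hqM⟩

theorem exists_hasDerivWithinAt_of_integral_neg [FiniteDimensional ℝ E] {β : ℝ → ℝ}
    (hβ : Continuous β) (hneg : ∫ s in 0..1, β s < 0) :
    ∃ κ : ℝ, 0 < κ ∧ ∀ δ : ℝ, 0 < δ → ∀ (S : ℝ → E → E) (K : ℝ≥0),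
      (∀ s ∈ Icc (0 : ℝ) 1, LipschitzOnWith K (S s) (closedBall 0 δ)) →
      ContinuousOn (uncurry S) (Icc 0 1 ×ˢ closedBall 0 δ) →
      (∀ s ∈ Icc (0 : ℝ) 1, ∀ y ∈ closedBall 0 δ, ‖S s y‖ ≤ κ * δ) →
      ∃ y : ℝ → E, y 0 = y 1 ∧ ∀ s ∈ Icc (0 : ℝ) 1,
        HasDerivWithinAt y (β s • y s + S s (y s)) (Icc 0 1) s ∧ y s ∈ closedBall 0 δ := by
  obtain ⟨q, M, hq, hq_pos, hq₀, hq₁, hM, hqM⟩ := exists_integrating_factor hβ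
  have hq₁ : q 1 < 1 := by simpa only [hq₁, exp_lt_one_iff] using hneg
  have hq_cont : Continuous q := continuous_iff_continuousAt.2 fun s => (hq s).continuousAt
  refine ⟨(1 - q 1) / (2 * M ^ 2), div_pos (sub_pos.2 hq₁) (by positivity),
    fun δ hδ S K hlip hcont hbound => ?_⟩
  have hmaps : ∀ s ∈ Icc (0 : ℝ) 1, ∀ v ∈ closedBall (0 : E) (δ / M), q s • v ∈ closedBall 0 δ :=
    fun s hs v hv => by
      rw [mem_closedBall_zero_iff] at hv ⊢
      rw [norm_smul, norm_of_nonneg (hq_pos s).le]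
      calc q s * ‖v‖ ≤ M * (δ / M) := by gcongr; exact (hqM s hs).1
        _ = δ := mul_div_cancel₀ δ hM.ne'
  have hlip' : ∀ s ∈ Icc (0 : ℝ) 1,
      LipschitzOnWith K (fun v => (q s)⁻¹ • S s (q s • v)) (closedBall 0 (δ / M)) :=
    fun s hs => LipschitzOnWith.of_dist_le_mul fun v hv w hw => by
      have := (hlip s hs).dist_le_mul _ (hmaps s hs v hv) _ (hmaps s hs w hw)
      rw [dist_smul₀, norm_of_nonneg (hq_pos s).le] at this
      rw [dist_smul₀, norm_inv, norm_of_nonneg (hq_pos s).le, inv_mul_le_iff₀ (hq_pos s)]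
      linarith
  have hbound' : ∀ s ∈ Icc (0 : ℝ) 1, ∀ v ∈ closedBall (0 : E) (δ / M),
      ‖(q s)⁻¹ • S s (q s • v)‖ < (1 - q 1) * (δ / M) := fun s hs v hv => by
    rw [norm_smul, norm_inv, norm_of_nonneg (hq_pos s).le]
    calc (q s)⁻¹ * ‖S s (q s • v)‖ ≤ M * ((1 - q 1) / (2 * M ^ 2) * δ) := by
          gcongr
          exacts [(hqM s hs).2, hbound s hs _ (hmaps s hs v hv)]
      _ = (1 - q 1) * (δ / M) / 2 := by field_simp
      _ < (1 - q 1) * (δ / M) := half_lt_self (mul_pos (sub_pos.2 hq₁) (div_pos hδ hM))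
  -- `y = q • v` turns `y' = β y + S(s, y)` into `v' = q⁻¹ S(s, q v)`.
  obtain ⟨v, hv₀₁, hv⟩ := exists_hasDerivWithinAt_apply_zero_eq_smul (div_pos hδ hM) (hq_pos 1)
    hq₁.le hlip' (fun v hv => (hq_cont.inv₀ fun s => (hq_pos s).ne').continuousOn.smul (hcont.comp
      (continuous_id.prodMk (hq_cont.smul continuous_const)).continuousOn
      fun s hs => ⟨hs, hmaps s hs v hv⟩)) hbound'
  refine ⟨fun s => q s • v s, by simpa only [hq₀, one_smul] using hv₀₁, fun s hs =>
    ⟨((hq s).hasDerivWithinAt.smul (hv s hs).1).congr_deriv ?_, hmaps s hs _ (hv s hs).2⟩⟩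
  rw [smul_inv_smul₀ (hq_pos s).ne', smul_smul, mul_comm, add_comm]

theorem exists_lipschitzOnWith_sub_smul {β : ℝ → ℝ} (hβ : Continuous β) {V : ℝ → E → E} {K : ℝ≥0}
    {t : Set E} (hlip : ∀ s ∈ Icc (0 : ℝ) 1, LipschitzOnWith K (V s) t) :
    ∃ K' : ℝ≥0, ∀ s ∈ Icc (0 : ℝ) 1, LipschitzOnWith K' (fun y => V s y - β s • y) t := by
  obtain ⟨B, hB⟩ := (isCompact_Icc (a := (0 : ℝ)) (b := 1)).bddAbove_image
    (f := fun s => ‖β s‖₊) hβ.nnnorm.continuousOn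
  exact ⟨K + B, fun s hs => (hlip s hs).sub
    ((lipschitzWith_smul (β s)).weaken (hB (mem_image_of_mem _ hs))).lipschitzOnWith⟩

theorem exists_periodic_hasDerivAt_of_integral_neg [FiniteDimensional ℝ E] {β : ℝ → ℝ}
    (hβ : Continuous β) (hneg : ∫ s in 0..1, β s < 0) :
    ∃ κ : ℝ, 0 < κ ∧ ∀ δ : ℝ, 0 < δ → ∀ (V : ℝ → E → E) (K : ℝ≥0),
      (∀ s ∈ Icc (0 : ℝ) 1, LipschitzOnWith K (V s) (closedBall 0 δ)) →
      ContinuousOn (uncurry V) (univ ×ˢ closedBall 0 δ) →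
      (∀ y ∈ closedBall 0 δ, Periodic (V · y) 1) →
      (∀ s ∈ Icc (0 : ℝ) 1, ∀ y ∈ closedBall 0 δ, ‖V s y - β s • y‖ ≤ κ * δ) →
      ∃ Y : ℝ → E, Periodic Y 1 ∧ ∀ s, HasDerivAt Y (V s (Y s)) s ∧ Y s ∈ closedBall 0 δ := by
  obtain ⟨κ, hκ, hsol⟩ := exists_hasDerivWithinAt_of_integral_neg (E := E) hβ hneg
  refine ⟨κ, hκ, fun δ hδ V K hlip hcont hper hbound => ?_⟩
  obtain ⟨K', hlip'⟩ := exists_lipschitzOnWith_sub_smul hβ hlip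
  obtain ⟨y, hy₀₁, hy⟩ := hsol δ hδ (fun s y => V s y - β s • y) K' hlip'
    ((hcont.mono (prod_mono_left (subset_univ _))).sub
      ((hβ.comp continuous_fst).smul continuous_snd).continuousOn) hbound
  simp only [add_sub_cancel] at hy
  let Y : ℝ → E := fun s => y (Int.fract s)
  have hY' : Periodic Y 1 := fun s => congrArg y (Int.fract_add_one s)
  have hY : ∀ s, Y s ∈ closedBall 0 δ := fun s => (hy _ (fract_mem_Icc s)).2
  have hY_cont : Continuous Y := ContinuousOn.comp_fract''
    (fun s hs => (hy s hs).1.continuousWithinAt) hy₀₁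
  have hYy : ∀ s ∈ Icc (0 : ℝ) 1, Y s = y s := fun s hs => by
    rcases hs.2.eq_or_lt with rfl | hs₁
    · simpa [Y] using hy₀₁
    · simp only [Y, Int.fract_eq_self.2 ⟨hs.1, hs₁⟩]
  have hG : Continuous fun s => V s (Y s) :=
    hcont.comp_continuous (continuous_id.prodMk hY_cont) fun s => ⟨mem_univ _, hY s⟩
  have hG' : Periodic (fun s => V s (Y s)) 1 := fun s => by
    simp only [hY' s, hper _ (hY s) s]
  exact ⟨Y, hY', fun s => ⟨hasDerivAt_comp_fract hG hG'
    (fun s hs => hYy s hs ▸ (hy s hs).1) hy₀₁ s, hY s⟩⟩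

theorem exists_hasDerivAt_comp_self_of_periodic {φ : ℝ → ℝ} (hφ : Continuous φ)
    (hφ_pos : ∀ s, 0 < φ s) (hφ' : Periodic φ 1) :
    ∃ (θ : ℝ → ℝ) (T : ℝ), 0 < T ∧ (∀ t, HasDerivAt θ (φ (θ t)) t) ∧ ∀ t, θ (t + T) = θ t + 1 := by
  have hinv : Continuous fun s => (φ s)⁻¹ := hφ.inv₀ fun s => (hφ_pos s).ne'
  have hinv_pos : ∀ s, 0 < (φ s)⁻¹ := fun s => inv_pos.2 (hφ_pos s)
  have hinv' : Periodic (fun s => (φ s)⁻¹) 1 := fun s => congrArg Inv.inv (hφ' s)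
  let τ : ℝ → ℝ := fun s => ∫ u in 0..s, (φ u)⁻¹
  have hτ : ∀ s, HasDerivAt τ (φ s)⁻¹ s := fun s =>
    (hinv.integral_hasStrictDerivAt 0 s).hasDerivAt
  have hτ_mono : StrictMono τ := strictMono_of_hasDerivAt_pos hτ hinv_pos
  have hτ_add : ∀ s, τ (s + 1) = τ s + τ 1 := fun s => by
    simpa only [zero_add] using
      hinv'.intervalIntegral_add_eq_add 0 s (hinv.intervalIntegrable · ·)
  have hτ_surj : Surjective τ :=
    (continuous_iff_continuousAt.2 fun s => (hτ s).continuousAt).surjective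
      (hinv'.tendsto_atTop_intervalIntegral_of_pos' (hinv.intervalIntegrable _ _) hinv_pos one_pos)
      (hinv'.tendsto_atBot_intervalIntegral_of_pos' (hinv.intervalIntegrable _ _) hinv_pos one_pos)
  let e : ℝ ≃o ℝ := hτ_mono.orderIsoOfSurjective τ hτ_surj
  have hτe : ∀ t, τ (e.symm t) = t := e.apply_symm_apply
  refine ⟨e.symm, τ 1, ?_, fun t => ?_, fun t => hτ_mono.injective ?_⟩
  · simpa [τ] using hτ_mono zero_lt_one
  · simpa only [inv_inv] using HasDerivAt.of_local_left_inverse e.symm.continuous.continuousAt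
      (hτ _) (hinv_pos _).ne' (.of_forall hτe)
  · rw [hτe, hτ_add, hτe]

theorem eventually_forall_of_periodic {X : Type*} [TopologicalSpace X] {p : ℝ → X → Prop} {x₀ : X}
    (hp : ∀ x, Periodic (p · x) 1) (h : ∀ s, ∀ᶠ z in 𝓝 (x₀, s), p z.2 z.1) :
    ∀ᶠ x in 𝓝 x₀, ∀ s, p s x := by
  have hIcc : ∀ᶠ x in 𝓝 x₀, ∀ s ∈ Icc (0 : ℝ) 1, p s x :=
    (isCompact_Icc (a := (0 : ℝ)) (b := 1)).eventually_forall_of_forall_eventually fun s _ => h s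
  filter_upwards [hIcc] with x hx s
  exact periodic_apply_fract (hp x) s ▸ hx _ (fract_mem_Icc s)

end PeriodicODE

noncomputable section TransverseEquation

variable {N : ℕ}

/-- The point `s𝟙 + y` of `ℝᴺ` lying over the diagonal point `s𝟙`. -/
def diagShift (s : ℝ) (y : Fin N → ℝ) : Fin N → ℝ := fun i => s + y i

/-- Speed `F(s𝟙 + y, s)` of a phase placed at `s` when the state is `s𝟙 + y`. -/
def phaseSpeed (F : (Fin N → ℝ) → ℝ → ℝ) (s : ℝ) (y : Fin N → ℝ) : ℝ := F (diagShift s y) s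

/-- The integrand `∂_z F(s𝟙, s) / F(s𝟙, s)` of `(H*)`, the infinitesimal rate at which
orbits leave the diagonal when the phase `s` is used as time. -/
def transverseRate (F : (Fin N → ℝ) → ℝ → ℝ) (s : ℝ) : ℝ :=
  pderZ F (fun _ => s) s / F (fun _ => s) s

/-- Right-hand side of the equation satisfied by `y` along a solution `s𝟙 + y` of the perturbed
system when the phase `s`, moving at `phaseSpeed`, is used as time. -/
def transverseField (F : (Fin N → ℝ) → ℝ → ℝ) (H : (Fin N → ℝ) → Fin N → ℝ) (s : ℝ)
    (y : Fin N → ℝ) (i : Fin N) : ℝ :=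
  (F (diagShift s y) (s + y i) + H (diagShift s y) i) / phaseSpeed F s y - 1

@[simp]
theorem diagShift_zero (s : ℝ) : diagShift s (0 : Fin N → ℝ) = fun _ => s :=
  funext fun _ => add_zero s

theorem contDiff_diagShift {n : WithTop ℕ∞} : ContDiff ℝ n (uncurry (diagShift (N := N))) :=
  contDiff_pi.2 fun i => contDiff_fst.add ((contDiff_apply ℝ ℝ i).comp contDiff_snd)

theorem abs_diagShift_sub_diagShift_le {s D : ℝ} {y : Fin N → ℝ} (hy : ‖y‖ ≤ D / 2) (i j : Fin N) :
    |diagShift s y i - diagShift s y j| ≤ D := by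
  rw [diagShift, diagShift, add_sub_add_left_eq_sub]
  linarith [norm_sub_le (y i) (y j), norm_le_pi_norm y i, norm_le_pi_norm y j,
    Real.norm_eq_abs (y i - y j)]

theorem periodic_apply_diagShift {α : Type*} {G : (Fin N → ℝ) → ℝ → α}
    (hG : ∀ Y z, G (fun i => Y i + 1) (z + 1) = G Y z) (y : Fin N → ℝ) (z : ℝ) :
    Periodic (fun s => G (diagShift s y) (s + z)) 1 := fun s => by
  have hshift : diagShift (s + 1) y = fun i => diagShift s y i + 1 :=
    funext fun i => add_right_comm s 1 (y i)
  simp only [hshift, add_right_comm s 1 z, hG]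

theorem abs_apply_le_normB_vec {H : (Fin N → ℝ) → Fin N → ℝ} (hH : Continuous H)
    (hH' : ∀ Y, H (fun i => Y i + 1) = H Y) {Y : Fin N → ℝ} (hY : memB' Y) (i : Fin N) :
    |H Y i| ≤ normB_vec H := by
  refine le_csSup ?_ ⟨Y, hY, i, rfl⟩
  obtain ⟨C, hC⟩ := ((isCompact_Icc (a := (0 : ℝ)) (b := 1)).prod
    (isCompact_closedBall (0 : Fin N → ℝ) 1)).exists_bound_of_continuousOn
    (hH.comp (contDiff_diagShift (n := 0)).continuous).continuousOn
  refine ⟨C, ?_⟩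
  rintro _ ⟨Z, hZ, j, rfl⟩
  have hZ_eq : Z = diagShift (Z j) (fun k => Z k - Z j) := funext fun k => by simp [diagShift]
  have hfract : H Z = H (diagShift (Int.fract (Z j)) fun k => Z k - Z j) := by
    conv_lhs => rw [hZ_eq]
    exact (periodic_apply_fract (periodic_apply_diagShift (G := fun Y _ => H Y)
      (fun Y _ => hH' Y) _ 0) (Z j)).symm
  rw [hfract]
  exact (norm_le_pi_norm (H _) j).trans <| hC (Int.fract (Z j), fun k => Z k - Z j)
    ⟨fract_mem_Icc _, mem_closedBall_zero_iff.2 <|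
      (pi_norm_le_iff_of_nonneg zero_le_one).2 fun k => hZ k j⟩

variable {F : (Fin N → ℝ) → ℝ → ℝ}

theorem hasDerivAt_pderZ (hF : ContDiff ℝ 1 (uncurry F)) (Y : Fin N → ℝ) (z : ℝ) :
    HasDerivAt (F Y) (pderZ F Y z) z :=
  ((hF.comp (contDiff_prodMk_right Y)).differentiable one_ne_zero z).hasDerivAt

theorem continuous_pderZ (hF : ContDiff ℝ 1 (uncurry F)) : Continuous (uncurry (pderZ F)) := by
  have hfderiv : uncurry (pderZ F) = fun p => fderiv ℝ (uncurry F) p (0, 1) := funext fun p =>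
    (hasDerivAt_pderZ hF p.1 p.2).unique <|
      (hF.differentiable one_ne_zero p).hasFDerivAt.comp_hasDerivAt (f := fun u => (p.1, u)) p.2
        ((hasDerivAt_const p.2 p.1).prodMk (hasDerivAt_id p.2))
  exact hfderiv ▸ (hF.continuous_fderiv one_ne_zero).clm_apply continuous_const

theorem pderZ_add_one (hF' : ∀ Y z, F (fun i => Y i + 1) (z + 1) = F Y z) (Y : Fin N → ℝ) (z : ℝ) :
    pderZ F (fun i => Y i + 1) (z + 1) = pderZ F Y z := by
  simp only [pderZ, ← deriv_comp_add_const, hF']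

theorem contDiff_phaseSpeed {n : WithTop ℕ∞} (hF : ContDiff ℝ n (uncurry F)) :
    ContDiff ℝ n (uncurry (phaseSpeed F)) :=
  hF.comp (contDiff_diagShift.prodMk contDiff_fst)

theorem periodic_phaseSpeed (hF' : ∀ Y z, F (fun i => Y i + 1) (z + 1) = F Y z) (y : Fin N → ℝ) :
    Periodic (phaseSpeed F · y) 1 := by
  simpa only [phaseSpeed, add_zero] using periodic_apply_diagShift hF' y 0

theorem periodic_transverseRate (hF' : ∀ Y z, F (fun i => Y i + 1) (z + 1) = F Y z) :
    Periodic (transverseRate F) 1 := fun s => by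
  simp only [transverseRate, pderZ_add_one hF' fun _ => s, hF' fun _ => s]

theorem alphaConst_le_phaseSpeed_zero (hF : Continuous (uncurry F))
    (hF' : ∀ Y z, F (fun i => Y i + 1) (z + 1) = F Y z) (s : ℝ) :
    alphaConst F ≤ phaseSpeed F s 0 := by
  rw [← periodic_apply_fract (periodic_phaseSpeed hF' 0) s, phaseSpeed, diagShift_zero]
  have hdiag : Continuous fun s : ℝ => F (fun _ => s) s :=
    hF.comp ((continuous_pi fun _ => continuous_id).prodMk continuous_id)
  exact csInf_le (isCompact_Icc.image hdiag).bddBelow (mem_image_of_mem _ (fract_mem_Icc s))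

theorem continuous_transverseRate (hF : ContDiff ℝ 1 (uncurry F))
    (hF_ne : ∀ s, phaseSpeed F s 0 ≠ 0) : Continuous (transverseRate F) := by
  have hdiag : Continuous fun s : ℝ => ((fun _ => s : Fin N → ℝ), s) :=
    (continuous_pi fun _ => continuous_id).prodMk continuous_id
  exact ((continuous_pderZ hF).comp hdiag).div (hF.continuous.comp hdiag) fun s => by
    simpa only [phaseSpeed, diagShift_zero] using hF_ne s

theorem eventually_forall_lt_phaseSpeed (hF : Continuous (uncurry F))
    (hF' : ∀ Y z, F (fun i => Y i + 1) (z + 1) = F Y z) {a : ℝ} (ha : a < alphaConst F) :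
    ∀ᶠ y : Fin N → ℝ in 𝓝 0, ∀ s, a < phaseSpeed F s y := by
  refine eventually_forall_of_periodic
    (fun y s => congrArg (a < ·) (periodic_phaseSpeed hF' y s)) fun s => ?_
  have hspeed : Continuous fun p : (Fin N → ℝ) × ℝ => phaseSpeed F p.2 p.1 :=
    (contDiff_phaseSpeed (contDiff_zero.2 hF)).continuous.comp continuous_swap
  exact hspeed.continuousAt.eventually
    (lt_mem_nhds (ha.trans_le (alphaConst_le_phaseSpeed_zero hF hF' s)))

theorem eventually_forall_abs_pderZ_div_sub_lt (hF : ContDiff ℝ 1 (uncurry F))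
    (hF' : ∀ Y z, F (fun i => Y i + 1) (z + 1) = F Y z) (hF_ne : ∀ s, phaseSpeed F s 0 ≠ 0)
    {ε : ℝ} (hε : 0 < ε) :
    ∀ᶠ p : (Fin N → ℝ) × ℝ in 𝓝 0, ∀ s,
      |pderZ F (diagShift s p.1) (s + p.2) / phaseSpeed F s p.1 - transverseRate F s| < ε := by
  refine eventually_forall_of_periodic (fun p s => ?_) fun s => ?_
  · simp only [periodic_apply_diagShift (pderZ_add_one hF') p.1 p.2 s,
      periodic_phaseSpeed hF' p.1 s, periodic_transverseRate hF' s]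
  · have hshift : Continuous fun q : ((Fin N → ℝ) × ℝ) × ℝ => diagShift q.2 q.1.1 :=
      (contDiff_diagShift (n := 0)).continuous.comp (continuous_snd.prodMk continuous_fst.fst)
    have hspeed : Continuous fun q : ((Fin N → ℝ) × ℝ) × ℝ => phaseSpeed F q.2 q.1.1 :=
      hF.continuous.comp (hshift.prodMk continuous_snd)
    have hcont : ContinuousAt (fun q : ((Fin N → ℝ) × ℝ) × ℝ =>
        |pderZ F (diagShift q.2 q.1.1) (q.2 + q.1.2) / phaseSpeed F q.2 q.1.1
          - transverseRate F q.2|) (0, s) :=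
      ((((continuous_pderZ hF).comp (hshift.prodMk
        (continuous_snd.add continuous_fst.snd))).continuousAt.div
        hspeed.continuousAt (hF_ne s)).sub
        ((continuous_transverseRate hF hF_ne).comp continuous_snd).continuousAt).abs
    refine hcont.eventually (gt_mem_nhds ?_)
    simpa [transverseRate, phaseSpeed] using hε

theorem norm_transverseField_sub_smul_le (hF : ContDiff ℝ 1 (uncurry F))
    {H : (Fin N → ℝ) → Fin N → ℝ} {s a b δ ε : ℝ} {y : Fin N → ℝ} (ha : 0 < a) (hb : 0 ≤ b)
    (hy : ‖y‖ ≤ δ) (hspeed : a ≤ phaseSpeed F s y)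
    (hrate : ∀ z, |z| ≤ δ →
      |pderZ F (diagShift s y) (s + z) / phaseSpeed F s y - transverseRate F s| ≤ ε)
    (hH : ∀ i, |H (diagShift s y) i| ≤ b) :
    ‖transverseField F H s y - transverseRate F s • y‖ ≤ ε * δ + b / a := by
  have hδ : 0 ≤ δ := (norm_nonneg y).trans hy
  have hε : 0 ≤ ε := (abs_nonneg _).trans (hrate 0 (by simpa using hδ))
  have hspeed_pos : 0 < phaseSpeed F s y := ha.trans_le hspeed
  refine (pi_norm_le_iff_of_nonneg (by positivity)).2 fun i => ?_
  have hyi : |y i| ≤ δ := (norm_le_pi_norm y i).trans hy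
  let g : ℝ → ℝ := fun z => F (diagShift s y) (s + z) / phaseSpeed F s y - transverseRate F s * z
  have hg : ∀ z, HasDerivAt g
      (pderZ F (diagShift s y) (s + z) / phaseSpeed F s y - transverseRate F s) z := fun z =>
    (((hasDerivAt_pderZ hF _ _).comp_const_add s z).div_const _).sub
      (hasDerivAt_const_mul _)
  have hg_sub : |g (y i) - g 0| ≤ ε * |y i - 0| :=
    Convex.norm_image_sub_le_of_norm_hasDerivWithin_le (fun z _ => (hg z).hasDerivWithinAt)
      (fun z hz => hrate z (abs_le.2 hz)) (convex_Icc (-δ) δ) (abs_le.1 (by simpa using hδ))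
      (abs_le.1 hyi)
  have hg_zero : g 0 = 1 := by
    simp only [g, phaseSpeed, add_zero, mul_zero, sub_zero]
    exact div_self hspeed_pos.ne'
  calc ‖(transverseField F H s y - transverseRate F s • y) i‖
      = |(g (y i) - g 0) + H (diagShift s y) i / phaseSpeed F s y| := by
        rw [hg_zero, Real.norm_eq_abs]
        simp only [transverseField, g, Pi.sub_apply, Pi.smul_apply, smul_eq_mul]
        ring_nf
    _ ≤ |g (y i) - g 0| + |H (diagShift s y) i / phaseSpeed F s y| := abs_add_le _ _
    _ ≤ ε * δ + b / a := by
        rw [sub_zero] at hg_sub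
        rw [abs_div, abs_of_pos hspeed_pos]
        gcongr
        exacts [hg_sub.trans (by gcongr), hH i]

theorem periodic_transverseField (hF' : ∀ Y z, F (fun i => Y i + 1) (z + 1) = F Y z)
    {H : (Fin N → ℝ) → Fin N → ℝ} (hH' : ∀ Y, H (fun i => Y i + 1) = H Y) (y : Fin N → ℝ) :
    Periodic (transverseField F H · y) 1 := fun s => funext fun i => by
  have hH'' : H (diagShift (s + 1) y) = H (diagShift s y) :=
    periodic_apply_diagShift (G := fun Y _ => H Y) (fun Y _ => hH' Y) y 0 s
  simp only [transverseField, periodic_apply_diagShift hF' y (y i) s, periodic_phaseSpeed hF' y s,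
    hH'']

theorem contDiffOn_transverseField {n : WithTop ℕ∞} (hF : ContDiff ℝ n (uncurry F))
    {H : (Fin N → ℝ) → Fin N → ℝ} (hH : ContDiff ℝ n H) {t : Set (ℝ × (Fin N → ℝ))}
    (ht : ∀ p ∈ t, phaseSpeed F p.1 p.2 ≠ 0) :
    ContDiffOn ℝ n (uncurry (transverseField F H)) t := by
  refine contDiffOn_pi.2 fun i => ContDiffOn.sub (ContDiffOn.div ?_
    (contDiff_phaseSpeed hF).contDiffOn ht) contDiffOn_const
  exact ((hF.comp (contDiff_diagShift.prodMk
    (contDiff_fst.add ((contDiff_apply ℝ ℝ i).comp contDiff_snd)))).add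
    (contDiff_pi.1 (hH.comp contDiff_diagShift) i)).contDiffOn

theorem exists_lipschitzOnWith_transverseField (hF : ContDiff ℝ 1 (uncurry F))
    {H : (Fin N → ℝ) → Fin N → ℝ} (hH : ContDiff ℝ 1 H) {δ : ℝ}
    (hF_ne : ∀ s, ∀ y ∈ closedBall 0 δ, phaseSpeed F s y ≠ 0) :
    ∃ K : ℝ≥0, ∀ s ∈ Icc (0 : ℝ) 1, LipschitzOnWith K (transverseField F H s) (closedBall 0 δ) := by
  obtain ⟨K, hK⟩ := (contDiffOn_transverseField hF hH
    (t := Icc 0 1 ×ˢ closedBall 0 δ) fun p hp => hF_ne p.1 p.2 hp.2).exists_lipschitzOnWith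
    one_ne_zero ((convex_Icc 0 1).prod (convex_closedBall 0 δ))
    (isCompact_Icc.prod (isCompact_closedBall 0 δ))
  refine ⟨K, fun s hs => LipschitzOnWith.of_dist_le_mul fun y hy z hz => ?_⟩
  simpa [Prod.dist_eq] using hK.dist_le_mul (s, y) ⟨hs, hy⟩ (s, z) ⟨hs, hz⟩

theorem exists_tube (hF : ContDiff ℝ 1 (uncurry F))
    (hF' : ∀ Y z, F (fun i => Y i + 1) (z + 1) = F Y z) (hα : 0 < alphaConst F)
    {ε δ₀ : ℝ} (hε : 0 < ε) (hδ₀ : 0 < δ₀) :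
    ∃ δ ∈ Ioc 0 δ₀, ∀ s, ∀ y : Fin N → ℝ, ‖y‖ ≤ δ → alphaConst F / 2 < phaseSpeed F s y ∧
      ∀ z, |z| ≤ δ →
        |pderZ F (diagShift s y) (s + z) / phaseSpeed F s y - transverseRate F s| < ε := by
  have hF_ne : ∀ s, phaseSpeed F s 0 ≠ 0 := fun s =>
    (hα.trans_le (alphaConst_le_phaseSpeed_zero hF.continuous hF' s)).ne'
  obtain ⟨δ₁, hδ₁, hspeed⟩ := Metric.eventually_nhds_iff.1
    (eventually_forall_lt_phaseSpeed hF.continuous hF' (half_lt_self hα))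
  obtain ⟨δ₂, hδ₂, hrate⟩ := Metric.eventually_nhds_iff.1
    (eventually_forall_abs_pderZ_div_sub_lt hF hF' hF_ne hε)
  obtain ⟨δ, hδ, hδ_lt⟩ := exists_between (lt_min hδ₀ (lt_min hδ₁ hδ₂))
  obtain ⟨hδδ₀, hδδ₁, hδδ₂⟩ : δ < δ₀ ∧ δ < δ₁ ∧ δ < δ₂ := by simpa only [lt_min_iff] using hδ_lt
  refine ⟨δ, ⟨hδ, hδδ₀.le⟩, fun s y hy => ⟨hspeed ?_ s, fun z hz => hrate (y := (y, z)) ?_ s⟩⟩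
  · rw [dist_zero_right]
    exact hy.trans_lt hδδ₁
  · rw [dist_zero_right]
    exact (max_le hy hz).trans_lt hδδ₂

theorem exists_periodic_hasDerivAt_transverseField (hF : ContDiff ℝ 1 (uncurry F))
    (hF' : ∀ Y z, F (fun i => Y i + 1) (z + 1) = F Y z) (hα : 0 < alphaConst F)
    (hstar : HypHstar F) {δ₀ : ℝ} (hδ₀ : 0 < δ₀) :
    ∃ r : ℝ, 0 < r ∧ ∀ H : (Fin N → ℝ) → Fin N → ℝ, ContDiff ℝ 1 H →
      (∀ Y, H (fun i => Y i + 1) = H Y) → normB_vec H < r →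
      ∃ Y : ℝ → Fin N → ℝ, Periodic Y 1 ∧ ∀ s, HasDerivAt Y (transverseField F H s (Y s)) s ∧
        0 < phaseSpeed F s (Y s) ∧ ‖Y s‖ ≤ δ₀ := by
  have hF_ne : ∀ s, phaseSpeed F s 0 ≠ 0 := fun s =>
    (hα.trans_le (alphaConst_le_phaseSpeed_zero hF.continuous hF' s)).ne'
  obtain ⟨κ, hκ, hsol⟩ := exists_periodic_hasDerivAt_of_integral_neg (E := Fin N → ℝ)
    (continuous_transverseRate hF hF_ne) hstar
  obtain ⟨δ, ⟨hδ, hδ_le⟩, htube⟩ := exists_tube hF hF' hα (half_pos hκ)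
    (lt_min hδ₀ (half_pos one_pos))
  have hspeed_pos : ∀ s, ∀ y ∈ closedBall (0 : Fin N → ℝ) δ, 0 < phaseSpeed F s y :=
    fun s y hy => (half_pos hα).trans (htube s y (mem_closedBall_zero_iff.1 hy)).1
  refine ⟨κ * δ / 2 * (alphaConst F / 2), by positivity, fun H hH hH' hHr => ?_⟩
  obtain ⟨K, hK⟩ := exists_lipschitzOnWith_transverseField hF hH
    fun s y hy => (hspeed_pos s y hy).ne'
  have hclose : ∀ s ∈ Icc (0 : ℝ) 1, ∀ y ∈ closedBall 0 δ,
      ‖transverseField F H s y - transverseRate F s • y‖ ≤ κ * δ := fun s _ y hy => by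
    rw [mem_closedBall_zero_iff] at hy
    have hH_le : ∀ i, |H (diagShift s y) i| ≤ κ * δ / 2 * (alphaConst F / 2) := fun i =>
      (abs_apply_le_normB_vec hH.continuous hH'
        (abs_diagShift_sub_diagShift_le (hy.trans (hδ_le.trans (min_le_right _ _)))) i).trans hHr.le
    refine (norm_transverseField_sub_smul_le hF (half_pos hα) (by positivity) hy
      (htube s y hy).1.le (fun z hz => ((htube s y hy).2 z hz).le) hH_le).trans_eq ?_
    rw [mul_div_cancel_right₀ _ (half_pos hα).ne']
    ring
  obtain ⟨Y, hY', hY⟩ := hsol δ hδ (transverseField F H) K hK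
    (contDiffOn_transverseField hF hH fun p hp => (hspeed_pos _ _ hp.2).ne').continuousOn
    (fun y _ => periodic_transverseField hF' hH' y) hclose
  exact ⟨Y, hY', fun s => ⟨(hY s).1, hspeed_pos s _ (hY s).2,
    (mem_closedBall_zero_iff.1 (hY s).2).trans (hδ_le.trans (min_le_left _ _))⟩⟩

theorem hasDerivAt_diagShift {H : (Fin N → ℝ) → Fin N → ℝ} {θ : ℝ → ℝ} {Y : ℝ → Fin N → ℝ} {t : ℝ}
    (hθ : HasDerivAt θ (phaseSpeed F (θ t) (Y (θ t))) t)
    (hY : HasDerivAt Y (transverseField F H (θ t) (Y (θ t))) (θ t))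
    (hspeed : phaseSpeed F (θ t) (Y (θ t)) ≠ 0) (i : Fin N) :
    HasDerivAt (fun τ => diagShift (θ τ) (Y (θ τ)) i)
      (F (diagShift (θ t) (Y (θ t))) (diagShift (θ t) (Y (θ t)) i) +
        H (diagShift (θ t) (Y (θ t))) i) t := by
  refine (hθ.add ((hasDerivAt_pi.1 hY i).comp t hθ)).congr_deriv ?_
  rw [transverseField, sub_mul, div_mul_cancel₀ _ hspeed, one_mul, add_sub_cancel]
  rfl

theorem exists_hasDerivAt_apply_add_eq_add_one (hF : ContDiff ℝ 1 (uncurry F))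
    (hF' : ∀ Y z, F (fun i => Y i + 1) (z + 1) = F Y z) (hα : 0 < alphaConst F)
    (hstar : HypHstar F) {D : ℝ} (hD : 0 < D) :
    ∃ r : ℝ, 0 < r ∧ ∀ H : (Fin N → ℝ) → Fin N → ℝ, ContDiff ℝ 1 H →
      (∀ Y, H (fun i => Y i + 1) = H Y) → normB_vec H < r →
      ∃ (X : ℝ → Fin N → ℝ) (T : ℝ), 0 < T ∧
        (∀ t i, HasDerivAt (fun τ => X τ i) (F (X t) (X t i) + H (X t) i) t) ∧
        (∀ t i, X (t + T) i = X t i + 1) ∧ ∀ t i j, |X t i - X t j| ≤ D := by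
  obtain ⟨r, hr, horbit⟩ := exists_periodic_hasDerivAt_transverseField hF hF' hα hstar (half_pos hD)
  refine ⟨r, hr, fun H hH hH' hHr => ?_⟩
  obtain ⟨Y, hY', hY⟩ := horbit H hH hH' hHr
  have hY_cont : Continuous Y := continuous_iff_continuousAt.2 fun s => (hY s).1.continuousAt
  obtain ⟨θ, T, hT, hθ, hθ_add⟩ := exists_hasDerivAt_comp_self_of_periodic
    (φ := fun s => phaseSpeed F s (Y s))
    ((contDiff_phaseSpeed hF).continuous.comp (continuous_id.prodMk hY_cont)) (fun s => (hY s).2.1)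
    fun s => by simp only [hY' s, periodic_phaseSpeed hF' (Y s) s]
  refine ⟨fun t => diagShift (θ t) (Y (θ t)), T, hT,
    fun t => hasDerivAt_diagShift (hθ t) (hY (θ t)).1 (hY (θ t)).2.1.ne', fun t i => ?_,
    fun t => abs_diagShift_sub_diagShift_le (hY (θ t)).2.2⟩
  simp only [diagShift, hθ_add, hY' (θ t), add_right_comm]

theorem main_result_II_general (hF : ContDiff ℝ 1 (uncurry F))
    (hF' : ∀ Y z, F (fun i => Y i + 1) (z + 1) = F Y z) (hα : 0 < alphaConst F)
    (hstar : HypHstar F) {D : ℝ} (hD : 0 < D) :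
    ∃ r : ℝ, 0 < r ∧ ∀ H : (Fin N → ℝ) → Fin N → ℝ, ContDiff ℝ 1 H →
      (∀ Y, H (fun i => Y i + 1) = H Y) → normB_vec H < r →
      ∃ (ρ : ℝ) (Ψ : Fin N → ℝ → ℝ) (X : ℝ → Fin N → ℝ), 0 < ρ ∧ (∀ i, ContDiff ℝ 1 (Ψ i)) ∧
        (∀ i, Periodic (Ψ i) (1 / ρ)) ∧
        (∀ t i, HasDerivAt (fun τ => X τ i) (F (X t) (X t i) + H (X t) i) t) ∧
        (∀ t i, X t i = ρ * t + Ψ i t) ∧ ∀ t i j, |X t i - X t j| ≤ D := by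
  obtain ⟨r, hr, horbit⟩ := exists_hasDerivAt_apply_add_eq_add_one hF hF' hα hstar hD
  refine ⟨r, hr, fun H hH hH' hHr => ?_⟩
  obtain ⟨X, T, hT, hX, hX_add, hX_diam⟩ := horbit H hH hH' hHr
  have hX_cont : Continuous X := continuous_pi fun i =>
    continuous_iff_continuousAt.2 fun t => (hX t i).continuousAt
  have hX_contDiff : ∀ i, ContDiff ℝ 1 fun t => X t i := fun i =>
    contDiff_one_iff_deriv.2 ⟨fun t => (hX t i).differentiableAt, by
      simp only [funext fun t => (hX t i).deriv]
      exact (hF.continuous.comp (hX_cont.prodMk ((continuous_apply i).comp hX_cont))).add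
        ((continuous_apply i).comp (hH.continuous.comp hX_cont))⟩
  refine ⟨1 / T, fun i t => X t i - 1 / T * t, X, one_div_pos.2 hT,
    fun i => (hX_contDiff i).sub (contDiff_const.mul contDiff_id), fun i t => ?_, hX,
    fun t i => (add_sub_cancel _ _).symm, hX_diam⟩
  simp only [one_div_one_div, hX_add, mul_add, one_div_mul_cancel hT.ne', add_sub_add_right_eq_sub]

end TransverseEquation

/-- **Main Result II.** Under `(H)` and `(H*)` there is `D* > 0`
such that for every `D ∈ (0, D*]` there is `𝓇 > 0` such that for every `C¹`,
`𝟙`-periodic perturbation `H` with `‖H‖_B < 𝓇` there are an initial condition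
`X*`, a frequency `ρ > 0`, and `C¹` functions `Ψ₁, …, Ψ_N` of period `1/ρ`, such
that the solution of the perturbed system starting at `X*` at time `t₀` is defined
for all `t ≥ t₀` and satisfies `xᵢ(t) = ρ t + Ψᵢ(t)`. -/
theorem main_result_II
    (N : ℕ) (hN : 2 ≤ N)
    (F : (Fin N → ℝ) → ℝ → ℝ) (hF : HypH F) (hFstar : HypHstar F)
    (t₀ : ℝ) :
    ∃ Dstar : ℝ, 0 < Dstar ∧
      ∀ D ∈ Set.Ioc (0:ℝ) Dstar,
        ∃ r : ℝ, 0 < r ∧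
          ∀ H : (Fin N → ℝ) → Fin N → ℝ,
            ContDiff ℝ 1 (fun Y => H Y) →
            (∀ Y : Fin N → ℝ, H (fun i => Y i + 1) = H Y) →
            normB_vec H < r →
            ∃ Xstar : Fin N → ℝ, ∃ ρ : ℝ, 0 < ρ ∧
              ∃ Ψ : Fin N → ℝ → ℝ,
                (∀ i, ContDiff ℝ 1 (Ψ i)) ∧
                (∀ i, ∀ t : ℝ, Ψ i (t + 1 / ρ) = Ψ i t) ∧
                ∃ X : ℝ → Fin N → ℝ,
                  X t₀ = Xstar ∧
                  (∀ t : ℝ, t₀ ≤ t → ∀ i,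
                    HasDerivAt (fun τ => X τ i) (F (X t) (X t i) + H (X t) i) t) ∧
                  (∀ t : ℝ, t₀ ≤ t → ∀ i, X t i = ρ * t + Ψ i t) := by
  obtain ⟨hC2, -, -, -, hper, hα⟩ := hF
  refine ⟨1, one_pos, fun D hD => ?_⟩
  obtain ⟨r, hr, hsol⟩ := main_result_II_general (hC2.of_le one_le_two) hper hα hFstar hD.1
  refine ⟨r, hr, fun H hH hH' hHr => ?_⟩
  obtain ⟨ρ, Ψ, X, hρ, hΨ, hΨ', hX, hXΨ, -⟩ := hsol H hH hH' hHr
  exact ⟨X t₀, ρ, hρ, Ψ, hΨ, hΨ', X, rfl, fun t _ => hX t, fun t _ => hXΨ t⟩
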